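/- For each permutation σ of {1,…,n}, there exists exactly one set D ⊆ {1,…,n} of decorated positions such that the decorated permutation (σ, D) has all of its schedule numbers equal to 1. Equivalently, the map which forgets decorations is a bijection from the set of decorated permutations of {1,…,n} with schedule 1^n onto S_n. -/

import Mathlib

/-! Let `R_0 = {0}, R_1, …, R_m` be the sets of values of the maximal decreasing runs of `σ`, and let
`W_j ⊆ R_j` be the undecorated values. All schedule numbers are `1` iff the sets `W_j` are built by
the following deterministic procedure, working backwards from the last run.

Write `b_j = min W_j` and `c_j = max W_j`. The schedule number of `b_j` counts all other elements
of `W_j`, so `W_j = {b_j, c_j}`. Comparing with the schedule numbers of the decorated values shows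
that

* `b_m = min R_m`, and `b_j` is the largest element of `R_j` below `c_{j+1}` for `j < m`;
* `c_{j+1} = max R_{j+1}` if `b_{j+1}` is below all of `R_j`, and `c_{j+1} = b_{j+1}` otherwise.

This determines the `W_j` (`GoodDec.eq_theDec`). Conversely, the recursion never gets stuck: in
either case some element of `R_j` is below `c_{j+1}`, because `min R_j < max R_{j+1}` at the ascent
separating the two runs. Its outcome satisfies the schedule condition (`RunSeq.theDec_good`).

The passage between positions and runs (`hasSchedOne_iff`) uses the function `runIdx`, which sends
a position to the index of its run and turns the intervals of positions occurring in `schedNum`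
into its fibres.
-/

open Finset

namespace QEuler

/-! ### Entries of a permutation of `{1,…,n}`, with the convention `σ₀ = 0`.
A permutation `σ ∈ S_n` is represented by `Equiv.Perm (Fin n)`; its entry at
position `i ∈ {1,…,n}` is `(σ (i-1)).val + 1 ∈ {1,…,n}`, and all other
positions (in particular position `0`) carry the value `0`. -/

def ent {n : ℕ} (σ : Equiv.Perm (Fin n)) (i : ℕ) : ℕ :=
  if h : 1 ≤ i ∧ i ≤ n then ((σ ⟨i - 1, by omega⟩ : Fin n) : ℕ) + 1 else 0

/-- Decorations: a set `D : Finset (Fin n)` records the decorated positions,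
`j : Fin n` encoding position `j+1 ∈ {1,…,n}`.  `isDec D i` tells whether
position `i` is decorated (position `0` never is). -/
def isDec {n : ℕ} (D : Finset (Fin n)) (i : ℕ) : Bool :=
  if h : 1 ≤ i ∧ i ≤ n then decide ((⟨i - 1, by omega⟩ : Fin n) ∈ D) else false

/-- Number of decorated positions among `{1,…,n}` for a decoration predicate. -/
def decCount (n : ℕ) (D : ℕ → Bool) : ℕ :=
  ((Finset.Icc 1 n).filter fun i => D i = true).card

/-! ### Major index and reverse major index -/

/-- Major index of the word `E 1, E 2, …, E n`. -/
def maj (n : ℕ) (E : ℕ → ℕ) : ℕ :=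
  ∑ i ∈ Finset.Icc 1 (n - 1), if E (i + 1) < E i then i else 0

/-- Reverse major index: the major index of the reversed word `E n, …, E 1`. -/
def revmaj (n : ℕ) (E : ℕ → ℕ) : ℕ := maj n fun i => E (n + 1 - i)

/-! ### Decreasing runs and schedule numbers -/

/-- The word is strictly decreasing along consecutive positions `p,…,q`. -/
def decOn (E : ℕ → ℕ) (p q : ℕ) : Prop := ∀ t ∈ Finset.Ico p q, E (t + 1) < E t

instance (E : ℕ → ℕ) (p q : ℕ) : Decidable (decOn E p q) := by
  unfold decOn; infer_instance

/-- Start of the maximal strictly decreasing consecutive run containing position `i`. -/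
def runStart (E : ℕ → ℕ) (i : ℕ) : ℕ :=
  Nat.find (show ∃ p, decOn E p i from ⟨i, fun t ht => absurd ht (by simp)⟩)

/-- End of the maximal strictly decreasing consecutive run containing position `i`
(positions are `0,…,n`). -/
def runEnd (n : ℕ) (E : ℕ → ℕ) (i : ℕ) : ℕ :=
  Nat.findGreatest (fun q => decOn E i q) n

/-- The schedule number of a decorated permutation (given by its entry word `E` on
positions `0,…,n`, with `E 0 = 0`, and decoration predicate `D`) at position `i`.
If `σ_i` is undecorated and lies in run `r_j` it counts the undecorated entries of `r_j`
larger than `σ_i` plus the undecorated entries of `r_{j-1}` smaller than `σ_i`;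
if `σ_i` is decorated it counts the undecorated entries of `r_j` smaller than `σ_i`
plus the undecorated entries of `r_{j+1}` larger than `σ_i`. -/
def schedNum (n : ℕ) (E : ℕ → ℕ) (D : ℕ → Bool) (i : ℕ) : ℕ :=
  if D i = true then
    ((Finset.Icc (runStart E i) (runEnd n E i)).filter fun t => D t = false ∧ E t < E i).card
      + (if runEnd n E i < n then
          ((Finset.Icc (runEnd n E i + 1) (runEnd n E (runEnd n E i + 1))).filter
            fun t => D t = false ∧ E i < E t).card
        else 0)
  else
    ((Finset.Icc (runStart E i) (runEnd n E i)).filter fun t => D t = false ∧ E i < E t).card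
      + (if runStart E i = 0 then 0 else
          ((Finset.Icc (runStart E (runStart E i - 1)) (runStart E i - 1)).filter
            fun t => D t = false ∧ E t < E i).card)

/-! ### Cyclic runs -/

/-- `σ_i,…,σ_j` is a cyclic (decreasing) run: for some shift `k`, the residues
`σ_t + k (mod n+1)` are strictly decreasing for `t = i,…,j`. -/
def IsCyclicRun (n : ℕ) (E : ℕ → ℕ) (i j : ℕ) : Prop :=
  i ≤ j ∧ j ≤ n ∧ ∃ k : ℕ, ∀ t ∈ Finset.Ico i j, (E (t + 1) + k) % (n + 1) < (E t + k) % (n + 1)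

/-- A cyclic run which cannot be extended to the left. -/
def LeftMaximalRun (n : ℕ) (E : ℕ → ℕ) (i j : ℕ) : Prop :=
  IsCyclicRun n E i j ∧ (i = 0 ∨ ¬ IsCyclicRun n E (i - 1) j)

/-- A cyclic run which cannot be extended to the right. -/
def RightMaximalRun (n : ℕ) (E : ℕ → ℕ) (i j : ℕ) : Prop :=
  IsCyclicRun n E i j ∧ (j = n ∨ ¬ IsCyclicRun n E i (j + 1))

/-! ### Double ascents, descents, peaks, valleys; `inv3` and `monot` -/

def DblAsc (E : ℕ → ℕ) (j : ℕ) : Prop := E (j - 2) < E (j - 1) ∧ E (j - 1) < E j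
def DblDesc (E : ℕ → ℕ) (j : ℕ) : Prop := E (j - 1) < E (j - 2) ∧ E j < E (j - 1)
def IsPeak (E : ℕ → ℕ) (j : ℕ) : Prop := E (j - 2) < E (j - 1) ∧ E j < E (j - 1)
def IsValley (E : ℕ → ℕ) (j : ℕ) : Prop := E (j - 1) < E (j - 2) ∧ E (j - 1) < E j

instance (E : ℕ → ℕ) (j : ℕ) : Decidable (DblAsc E j) := by unfold DblAsc; infer_instance
instance (E : ℕ → ℕ) (j : ℕ) : Decidable (DblDesc E j) := by unfold DblDesc; infer_instance
instance (E : ℕ → ℕ) (j : ℕ) : Decidable (IsPeak E j) := by unfold IsPeak; infer_instance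
instance (E : ℕ → ℕ) (j : ℕ) : Decidable (IsValley E j) := by unfold IsValley; infer_instance

/-- `(i,j)` is a 3-inversion. -/
def Inv3Pair (E : ℕ → ℕ) (i j : ℕ) : Prop :=
  (DblAsc E j ∧ E (j - 1) < E i ∧ E i < E j) ∨
  (DblDesc E j ∧ E j < E i ∧ E i < E (j - 1)) ∨
  (IsPeak E j ∧ E j < E i) ∨
  (IsValley E j ∧ E i < E j)

instance (E : ℕ → ℕ) (i j : ℕ) : Decidable (Inv3Pair E i j) := by
  unfold Inv3Pair; infer_instance

/-- Number of 3-inversions of the word `E 1, …, E n` (with the convention `E 0 = 0`). -/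
def inv3 (n : ℕ) (E : ℕ → ℕ) : ℕ :=
  ((Finset.Icc 1 n ×ˢ Finset.Icc 1 n).filter fun p => p.1 < p.2 ∧ Inv3Pair E p.1 p.2).card

/-- Number of double ascents and double descents. -/
def monot (n : ℕ) (E : ℕ → ℕ) : ℕ :=
  ((Finset.Icc 2 n).filter fun j => DblAsc E j ∨ DblDesc E j).card

/-! ### Alternating permutations, `31-2` patterns and Chebikin's statistic -/

/-- `σ₁ > σ₂ < σ₃ > ⋯`. -/
def IsAlternating (n : ℕ) (E : ℕ → ℕ) : Prop :=
  ∀ i ∈ Finset.Icc 1 (n - 1), if Odd i then E (i + 1) < E i else E i < E (i + 1)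

instance (n : ℕ) (E : ℕ → ℕ) : Decidable (IsAlternating n E) := by
  unfold IsAlternating; infer_instance

/-- The finset of alternating permutations of `{1,…,n}`. -/
def altPerms (n : ℕ) : Finset (Equiv.Perm (Fin n)) :=
  Finset.univ.filter fun σ => IsAlternating n (ent σ)

/-- Number of `31-2` patterns: pairs `(i,j)` with `i+1 < j ≤ n` and `σ_j > σ_i > σ_{i+1}`. -/
def pat312 (n : ℕ) (E : ℕ → ℕ) : ℕ :=
  ((Finset.Icc 1 n ×ˢ Finset.Icc 1 n).filter fun p =>
    p.1 + 1 < p.2 ∧ E (p.1 + 1) < E p.1 ∧ E p.1 < E p.2).card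

/-- Chebikin's alternating inversion statistic `î`. -/
def chebi (n : ℕ) (E : ℕ → ℕ) : ℕ :=
  ∑ i ∈ Finset.Icc 1 (n - 1),
    ((Finset.Icc (i + 1) n).filter fun j => if Odd i then E j < E i else E i < E j).card

/-! ### Insertion `η_l`, structural attribute `ã`, the shift `k + τ` and `δ_k` -/

/-- The entry word of the insertion `η_l(σ) ∈ S_{n+1}` of the value `l` at the end of `σ ∈ S_n`. -/
def etaEnt (n l : ℕ) (E : ℕ → ℕ) (i : ℕ) : ℕ :=
  if i = n + 1 then l
  else if 1 ≤ i ∧ i ≤ n then (if l ≤ E i then E i + 1 else E i) else 0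

/-- Structural attribute `ã(σ)` of `σ ∈ S_n`. -/
def atil (n : ℕ) (E : ℕ → ℕ) : ℕ :=
  if E (n - 1) < E n then n + 1 - E n else E n

/-- The entry word of `k + τ ∈ S_{n+1}` for `τ ∈ S_n`:
`σ₀ = 0` and `σ_{i+1}` is the representative of `k + τ_i (mod n+1)` in `{1,…,n+1}`. -/
def shiftEnt (n k : ℕ) (E : ℕ → ℕ) (i : ℕ) : ℕ :=
  if i = 0 then 0
  else if (k + E (i - 1)) % (n + 1) = 0 then n + 1 else (k + E (i - 1)) % (n + 1)

/-- Position of the first (leftmost, among `1,…,n`) undecorated letter;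
equals `n+1` if every position is decorated. -/
def firstUndecPos (n : ℕ) (D : ℕ → Bool) : ℕ :=
  Nat.find (show ∃ i, n < i ∨ (1 ≤ i ∧ D i = false) from ⟨n + 1, Or.inl (by omega)⟩)

/-- `a(τ)`: the value of the first undecorated letter of `τ`. -/
def aVal (n : ℕ) (E : ℕ → ℕ) (D : ℕ → Bool) : ℕ := E (firstUndecPos n D)

/-- Decorations of the `k`-th descendant `δ_k(τ)`: position `1` is decorated iff
`k > n+1-a(τ)`, and for `i ≥ 2` position `i` is decorated iff position `i-1` of `τ` is. -/
def deltaDec (n k : ℕ) (D : ℕ → Bool) (aval : ℕ) (i : ℕ) : Bool :=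
  if i = 0 then false
  else if i = 1 then decide (n + 1 - aval < k)
  else D (i - 1)

/-! ### Valley-decorated standardly labelled Dyck paths

A path of size `n` is encoded by its area word `a : Fin n → Fin n`
(`a i` = number of whole squares between the `(i+1)`-st north step and the diagonal;
a word `a₁ ⋯ a_n` is the area word of a Dyck path iff `a₁ = 0` and `a_i ≤ a_{i-1} + 1`),
its labelling `w : Equiv.Perm (Fin n)`, and its decoration set `dv : Finset (Fin n)`
(`j` encoding the position `j+1`). -/

abbrev PathData (n : ℕ) := (Fin n → Fin n) × Equiv.Perm (Fin n) × Finset (Fin n)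

/-- The area word, on positions `1,…,n`. -/
def aw {n : ℕ} (P : PathData n) (i : ℕ) : ℕ :=
  if h : 1 ≤ i ∧ i ≤ n then ((P.1 ⟨i - 1, by omega⟩ : Fin n) : ℕ) else 0

/-- The labels, on positions `1,…,n`. -/
def lbl {n : ℕ} (P : PathData n) (i : ℕ) : ℕ := ent P.2.1 i

/-- Whether the `i`-th north step is decorated. -/
def pdec {n : ℕ} (P : PathData n) (i : ℕ) : Bool := isDec P.2.2 i

/-- The `i`-th north step is a contractible valley: `a_{i-1} > a_i`, or
`a_{i-1} = a_i` and `w_{i-1} < w_i`. -/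
def ContractibleValley {n : ℕ} (P : PathData n) (i : ℕ) : Prop :=
  2 ≤ i ∧ i ≤ n ∧ (aw P i < aw P (i - 1) ∨ (aw P (i - 1) = aw P i ∧ lbl P (i - 1) < lbl P i))

instance {n : ℕ} (P : PathData n) (i : ℕ) : Decidable (ContractibleValley P i) := by
  unfold ContractibleValley; infer_instance

/-- `P` encodes a genuine valley-decorated standardly labelled Dyck path:
the area word is valid, labels in a common column increase from bottom to top
(equivalently, consecutive north steps carry increasing labels), and every
decoration sits on a contractible valley. -/
def IsValidPath {n : ℕ} (P : PathData n) : Prop :=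
  (1 ≤ n → aw P 1 = 0) ∧
  (∀ i ∈ Finset.Icc 2 n, aw P i ≤ aw P (i - 1) + 1) ∧
  (∀ i ∈ Finset.Icc 2 n, aw P i = aw P (i - 1) + 1 → lbl P (i - 1) < lbl P i) ∧
  (∀ i ∈ Finset.Icc 1 n, pdec P i = true → ContractibleValley P i)

instance {n : ℕ} (P : PathData n) : Decidable (IsValidPath P) := by
  unfold IsValidPath; infer_instance

/-- The finset `stLD(n)^{•k}` of valley-decorated standardly labelled Dyck paths
of size `n` with exactly `k` decorated (contractible) valleys. -/
def stLD (n k : ℕ) : Finset (PathData n) :=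
  Finset.univ.filter fun P => IsValidPath P ∧ P.2.2.card = k

/-- The area statistic. -/
def area {n : ℕ} (P : PathData n) : ℕ := ∑ i ∈ Finset.Icc 1 n, aw P i

/-- `(i,j)` is a primary diagonal inversion. -/
def PrimaryDinv {n : ℕ} (P : PathData n) (i j : ℕ) : Prop :=
  aw P i = aw P j ∧ lbl P i < lbl P j ∧ pdec P i = false

/-- `(i,j)` is a secondary diagonal inversion. -/
def SecondaryDinv {n : ℕ} (P : PathData n) (i j : ℕ) : Prop :=
  aw P i = aw P j + 1 ∧ lbl P j < lbl P i ∧ pdec P i = false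

instance {n : ℕ} (P : PathData n) (i j : ℕ) : Decidable (PrimaryDinv P i j) := by
  unfold PrimaryDinv; infer_instance
instance {n : ℕ} (P : PathData n) (i j : ℕ) : Decidable (SecondaryDinv P i j) := by
  unfold SecondaryDinv; infer_instance

/-- The set of diagonal-inversion pairs `(i,j)`, `1 ≤ i < j ≤ n`. -/
def dinvPairs {n : ℕ} (P : PathData n) : Finset (ℕ × ℕ) :=
  (Finset.Icc 1 n ×ˢ Finset.Icc 1 n).filter fun p =>
    p.1 < p.2 ∧ (PrimaryDinv P p.1 p.2 ∨ SecondaryDinv P p.1 p.2)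

/-- `dinv(P)`: number of primary and secondary diagonal inversions minus the
number of decorated valleys (a nonnegative quantity). -/
def dinv {n : ℕ} (P : PathData n) : ℕ := (dinvPairs P).card - P.2.2.card

/-! ### The diagonal word of a path -/

/-- Position in the diagonal word of the label of the `i`-th north step:
labels are listed diagonal by diagonal, and within a diagonal in decreasing order. -/
def dwPos {n : ℕ} (P : PathData n) (i : ℕ) : ℕ :=
  ((Finset.Icc 1 n).filter fun i' =>
    aw P i' < aw P i ∨ (aw P i' = aw P i ∧ lbl P i ≤ lbl P i')).card

/-- The `j`-th letter of the diagonal word `dw(P)`. -/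
def dwEnt {n : ℕ} (P : PathData n) (j : ℕ) : ℕ :=
  ∑ i ∈ (Finset.Icc 1 n).filter (fun i => dwPos P i = j), lbl P i

/-- Whether the `j`-th letter of the diagonal word is decorated. -/
def dwDec {n : ℕ} (P : PathData n) (j : ℕ) : Bool :=
  decide (((Finset.Icc 1 n).filter fun i => dwPos P i = j ∧ pdec P i = true).Nonempty)

end QEuler

namespace QEuler

/-- All schedule numbers of the decorated permutation equal `1`. -/
def HasSchedOne (n : ℕ) (E : ℕ → ℕ) (D : ℕ → Bool) : Prop :=
  ∀ i ∈ Finset.Icc 1 n, schedNum n E D i = 1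

instance (n : ℕ) (E : ℕ → ℕ) (D : ℕ → Bool) : Decidable (HasSchedOne n E D) := by
  unfold HasSchedOne; infer_instance

/-- The diagonal word of `P` is the decorated permutation `(σ, D)`. -/
def DwEq {n : ℕ} (P : PathData n) (σ : Equiv.Perm (Fin n)) (D : Finset (Fin n)) : Prop :=
  (∀ j ∈ Finset.Icc 1 n, dwEnt P j = ent σ j) ∧ ∀ j ∈ Finset.Icc 1 n, dwDec P j = isDec D j

instance {n : ℕ} (P : PathData n) (σ : Equiv.Perm (Fin n)) (D : Finset (Fin n)) :
    Decidable (DwEq P σ D) := by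
  unfold DwEq; infer_instance

end QEuler

open QEuler

namespace QEuler

/-! ### Decorations of an abstract sequence of runs -/

/-- The schedule `1^n` condition in terms of runs: `R j` is the set of values in the run `r_j`
(empty beyond the last run) and `W j` the set of its undecorated values. -/
structure GoodDec (R W : ℕ → Finset ℕ) : Prop where
  sub : ∀ j, W j ⊆ R j
  zero : W 0 = R 0
  undec : ∀ j, ∀ x ∈ W (j + 1), #{y ∈ W (j + 1) | x < y} + #{y ∈ W j | y < x} = 1
  dec : ∀ j, ∀ x ∈ R (j + 1), x ∉ W (j + 1) →
    #{y ∈ W (j + 1) | y < x} + #{y ∈ W (j + 2) | x < y} = 1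

/-- The properties used of the value sets `R 0, …, R m` of the maximal decreasing runs of a word
starting with `0`. By `ascent`, the minimum of a run lies below the maximum of the next one. -/
structure RunSeq (m : ℕ) (R : ℕ → Finset ℕ) : Prop where
  zero : R 0 = {0}
  nonempty : ∀ j ≤ m, (R j).Nonempty
  empty : ∀ j, m < j → R j = ∅
  disj : ∀ j, ∀ x ∈ R j, x ∉ R (j + 1)
  ascent : ∀ j < m, ∃ x ∈ R j, ∃ y ∈ R (j + 1), x < y

/-- The largest element of `S` below `x` (`0` if there is none). -/
def predIn (S : Finset ℕ) (x : ℕ) : ℕ := {y ∈ S | y < x}.sup id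

/-- For consecutive runs `S`, `S'` of a decoration with schedule `1^n`, the largest undecorated
value of `S'` in terms of the smallest one `b`: it is the maximum of `S'` if `b` lies below all
of `S`, and otherwise `b` is the only undecorated value of `S'`. -/
def topOf (S S' : Finset ℕ) (b : ℕ) : ℕ := if ∀ y ∈ S, b < y then S'.sup id else b

lemma predIn_spec {S : Finset ℕ} {x : ℕ} (h : ∃ y ∈ S, y < x) :
    predIn S x ∈ S ∧ predIn S x < x ∧ ∀ y ∈ S, y < x → y ≤ predIn S x := by
  obtain ⟨y, hy, hyx⟩ := h
  have hne : ({y ∈ S | y < x} : Finset ℕ).Nonempty := ⟨y, by simp [hy, hyx]⟩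
  obtain ⟨z, hz, hz'⟩ := Finset.exists_mem_eq_sup _ hne id
  have hp : predIn S x = z := hz'
  simp only [mem_filter] at hz
  refine ⟨hp ▸ hz.1, hp ▸ hz.2, fun w hw hwx => ?_⟩
  exact Finset.le_sup (f := id) (by simp [hw, hwx])

lemma predIn_eq {S : Finset ℕ} {x b : ℕ} (hb : b ∈ S) (hbx : b < x)
    (h : ∀ y ∈ S, y < x → y ≤ b) : predIn S x = b := by
  obtain ⟨h1, h2, h3⟩ := predIn_spec ⟨b, hb, hbx⟩
  exact le_antisymm (h _ h1 h2) (h3 _ hb hbx)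

lemma sup_id_spec {S : Finset ℕ} (h : S.Nonempty) : S.sup id ∈ S ∧ ∀ y ∈ S, y ≤ S.sup id := by
  obtain ⟨z, hz, hz'⟩ := Finset.exists_mem_eq_sup _ h id
  exact ⟨hz' ▸ hz, fun y hy => Finset.le_sup (f := id) hy⟩

/-- The forced smallest undecorated values of the runs, listed from the last run backwards:
`lowRev m R k` belongs to the run `r_{m-k}`. It is the minimum of the last run, and for earlier
runs the predecessor of the largest undecorated value of the next run. -/
noncomputable def lowRev (m : ℕ) (R : ℕ → Finset ℕ) : ℕ → ℕ
  | 0 => sInf (R m : Set ℕ)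
  | k + 1 => predIn (R (m - (k + 1)))
      (topOf (R (m - (k + 1))) (R (m - k)) (lowRev m R k))

/-- The undecorated values of the unique decoration with schedule `1^n`. -/
noncomputable def theDec (m : ℕ) (R : ℕ → Finset ℕ) (j : ℕ) : Finset ℕ :=
  if m < j then ∅ else
    match j with
    | 0 => {lowRev m R m}
    | i + 1 => {lowRev m R (m - (i + 1)), topOf (R i) (R (i + 1)) (lowRev m R (m - (i + 1)))}

lemma lowRev_step {m : ℕ} {R : ℕ → Finset ℕ} {j : ℕ} (hj : j < m) :
    lowRev m R (m - j) =
      predIn (R j) (topOf (R j) (R (j + 1)) (lowRev m R (m - (j + 1)))) := by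
  obtain ⟨k, rfl⟩ := Nat.exists_eq_add_of_lt hj
  have h1 : j + k + 1 - j = k + 1 := by omega
  have h2 : j + k + 1 - (j + 1) = k := by omega
  have h3 : j + k + 1 - k = j + 1 := by omega
  rw [h1, h2, lowRev, show j + k + 1 - (k + 1) = j by omega, h3]

/-- Some element of a run lies below the largest undecorated value of the next run. -/
lemma RunSeq.exists_lt_topOf {m : ℕ} {R : ℕ → Finset ℕ} (hR : RunSeq m R) {j b : ℕ} (hj : j < m)
    (hb : b ∈ R (j + 1)) : ∃ y ∈ R j, y < topOf (R j) (R (j + 1)) b := by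
  unfold topOf
  split_ifs with h
  · obtain ⟨x, hx, y, hy, hxy⟩ := hR.ascent j hj
    exact ⟨x, hx, hxy.trans_le ((sup_id_spec ⟨y, hy⟩).2 y hy)⟩
  · push Not at h
    obtain ⟨y, hy, hyb⟩ := h
    refine ⟨y, hy, lt_of_le_of_ne hyb ?_⟩
    rintro rfl
    exact hR.disj _ _ hy hb

lemma RunSeq.lowRev_mem {m : ℕ} {R : ℕ → Finset ℕ} (hR : RunSeq m R) :
    ∀ k ≤ m, lowRev m R k ∈ R (m - k) := by
  intro k
  induction k with
  | zero => intro _; exact Nat.sInf_mem (s := (R m : Set ℕ)) (by simpa using hR.nonempty m le_rfl)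
  | succ k ih =>
    intro hk
    have h := ih (by omega)
    have e : m - k = (m - (k + 1)) + 1 := by omega
    rw [lowRev, e]
    rw [e] at h
    exact (predIn_spec (hR.exists_lt_topOf (by omega) h)).1

lemma topOf_cases {S S' : Finset ℕ} {b : ℕ} (hb : b ∈ S') :
    b ≤ topOf S S' b ∧ topOf S S' b ∈ S' ∧
    ((topOf S S' b = b ∧ ∃ y ∈ S, y ≤ b) ∨
      ((∀ y ∈ S, b < y) ∧ ∀ y ∈ S', y ≤ topOf S S' b)) := by
  unfold topOf
  split_ifs with h
  · have := sup_id_spec ⟨b, hb⟩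
    exact ⟨this.2 b hb, this.1, Or.inr ⟨h, this.2⟩⟩
  · push Not at h
    exact ⟨le_rfl, hb, Or.inl ⟨rfl, h⟩⟩

lemma card_eq_one_of_iff {S : Finset ℕ} {a : ℕ} (h : ∀ y, y ∈ S ↔ y = a) : #S = 1 :=
  Finset.card_eq_one.2 ⟨a, by ext y; simp [h]⟩

lemma RunSeq.theDec_good {m : ℕ} {R : ℕ → Finset ℕ} (hR : RunSeq m R) :
    GoodDec R (theDec m R) := by
  -- `b` and `c` are the smallest and largest undecorated values of each run.
  obtain ⟨b, hbdef⟩ : ∃ b : ℕ → ℕ, ∀ j, b j = lowRev m R (m - j) := ⟨_, fun _ => rfl⟩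
  have hb : ∀ j ≤ m, b j ∈ R j := by
    intro j hj
    have := hR.lowRev_mem (m - j) (by omega)
    rwa [show m - (m - j) = j by omega, ← hbdef] at this
  have hlast : ∀ y ∈ R m, b m ≤ y := by
    intro y hy
    rw [hbdef, Nat.sub_self]
    exact Nat.sInf_le (s := (R m : Set ℕ)) hy
  have hW0 : theDec m R 0 = {b 0} := by simp [theDec, hbdef]
  obtain ⟨c, hc0, hc⟩ : ∃ c : ℕ → ℕ, c 0 = b 0 ∧
      ∀ j, c (j + 1) = topOf (R j) (R (j + 1)) (b (j + 1)) :=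
    ⟨fun j => j.casesOn (b 0) fun j => topOf (R j) (R (j + 1)) (b (j + 1)), rfl, fun _ => rfl⟩
  have hW : ∀ j ≤ m, theDec m R j = {b j, c j} := by
    intro j hj
    cases j with
    | zero => simp [hW0, hc0]
    | succ j => simp [theDec, hc, hbdef, show ¬ m < j + 1 by omega]
  have hWe : ∀ j, m < j → theDec m R j = ∅ := by
    intro j hj
    simp [theDec, hj]
  have hpred : ∀ j < m, b j < c (j + 1) ∧ ∀ y ∈ R j, y < c (j + 1) → y ≤ b j := by
    intro j hj
    have h := predIn_spec (hR.exists_lt_topOf hj (hb (j + 1) hj))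
    rw [← hc] at h
    have e : b j = predIn (R j) (c (j + 1)) := by
      rw [hbdef, lowRev_step hj, hc, hbdef]
    rw [e]
    exact h.2
  have hbc : ∀ j ≤ m, b j ≤ c j ∧ c j ∈ R j ∧ (c j = b j ∨ ∀ y ∈ R j, y ≤ c j) := by
    intro j hj
    cases j with
    | zero => exact ⟨hc0.ge, hc0 ▸ hb 0 hj, Or.inl hc0⟩
    | succ j =>
      have h := topOf_cases (S := R j) (hb (j + 1) hj)
      rw [← hc] at h
      exact ⟨h.1, h.2.1, h.2.2.imp (·.1) (·.2)⟩
  have hlow : ∀ j < m, c (j + 1) = b (j + 1) ∨ ∀ y ∈ R j, b (j + 1) < y := by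
    intro j hj
    have h := (topOf_cases (S := R j) (hb (j + 1) hj)).2.2
    rw [← hc] at h
    exact h.imp (·.1) (·.1)
  refine ⟨fun j => ?_, ?_, fun j x hx => ?_, fun j x hx hxW => ?_⟩
  · by_cases hj : m < j
    · simp [hWe j hj]
    · rw [hW j (by omega)]
      intro x hx
      simp only [mem_insert, mem_singleton] at hx
      rcases hx with rfl | rfl
      · exact hb j (by omega)
      · exact (hbc j (by omega)).2.1
  · have := hb 0 (by omega)
    rw [hR.zero] at this ⊢
    rw [hW0]
    simpa using this
  · have hj : j < m := by
      by_contra h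
      simp [hWe (j + 1) (by omega)] at hx
    rw [hW (j + 1) hj] at hx ⊢
    rw [hW j hj.le]
    obtain ⟨p1, p2⟩ := hpred j hj
    obtain ⟨q1, q2, q3⟩ := hbc j hj.le
    obtain ⟨r1, r2, r3⟩ := hbc (j + 1) hj
    have hbj := hb j hj.le
    by_cases hxc : x = c (j + 1)
    · subst hxc
      have e1 : ({y ∈ ({b (j + 1), c (j + 1)} : Finset ℕ) | c (j + 1) < y}) = ∅ := by
        ext y; simp; omega
      rw [e1, card_empty, zero_add]
      refine card_eq_one_of_iff (a := b j) fun y => ?_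
      have := p2 _ q2
      simp
      grind
    · have hxb : x = b (j + 1) := by simpa [hxc] using hx
      subst hxb
      have hl := (hlow j hj).resolve_left (fun h => hxc h.symm)
      have e2 : ({y ∈ ({b j, c j} : Finset ℕ) | y < b (j + 1)}) = ∅ := by
        have := hl _ hbj
        ext y; simp; omega
      rw [e2, card_empty, add_zero]
      refine card_eq_one_of_iff (a := c (j + 1)) fun y => ?_
      simp
      grind
  · have hj : j + 1 ≤ m := by
      by_contra h
      simp [hR.empty (j + 1) (by omega)] at hx
    rw [hW (j + 1) hj] at hxW ⊢
    obtain ⟨r1, r2, r3⟩ := hbc (j + 1) hj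
    simp only [mem_insert, mem_singleton, not_or] at hxW
    rcases lt_or_gt_of_ne hxW.1 with hlt | hgt
    · have hj2 : j + 1 < m := by
        refine lt_of_le_of_ne hj fun h => ?_
        have := hlast x (h ▸ hx)
        rw [← h] at this
        omega
      obtain ⟨p1, p2⟩ := hpred (j + 1) hj2
      obtain ⟨q1, q2, q3⟩ := hbc (j + 2) hj2
      have hl := hlow (j + 1) hj2
      rw [hW (j + 2) hj2]
      have e1 : ({y ∈ ({b (j + 1), c (j + 1)} : Finset ℕ) | y < x}) = ∅ := by
        ext y; simp; omega
      rw [e1, card_empty, zero_add]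
      refine card_eq_one_of_iff (a := c (j + 2)) fun y => ?_
      have := fun h : ∀ y ∈ R (j + 1), b (j + 1 + 1) < y => h x hx
      simp
      grind
    · have e2 : ({y ∈ theDec m R (j + 2) | x < y}) = ∅ := by
        by_cases hj2 : j + 1 < m
        · obtain ⟨p1, p2⟩ := hpred (j + 1) hj2
          obtain ⟨q1, q2, q3⟩ := hbc (j + 2) hj2
          rw [hW (j + 2) hj2]
          have := p2 x hx
          ext y; simp
          grind
        · rw [hWe (j + 2) (by omega)]; simp
      rw [e2, card_empty, add_zero]
      refine card_eq_one_of_iff (a := b (j + 1)) fun y => ?_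
      have := r3.imp_right (fun h => h x hx)
      simp
      grind

/-- If `W (j + 1)` were empty, so would be `W (j + 2)`, and the decorated values of `R (j + 1)`
would have schedule number `0`. -/
lemma GoodDec.nonempty {m : ℕ} {R W : ℕ → Finset ℕ} (hR : RunSeq m R) (hW : GoodDec R W)
    {j : ℕ} (hj : j ≤ m) : (W j).Nonempty := by
  cases j with
  | zero => rw [hW.zero]; exact hR.nonempty 0 hj
  | succ j =>
    by_contra hne
    rw [not_nonempty_iff_eq_empty] at hne
    -- Otherwise the largest element of `W (j + 2)` has schedule number `0`.
    have hnext : W (j + 2) = ∅ := by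
      by_contra hne2
      obtain ⟨h1, h2⟩ := sup_id_spec (nonempty_iff_ne_empty.2 hne2)
      have := hW.undec (j + 1) _ h1
      rw [hne, filter_eq_empty_iff.2 fun y hy => not_lt.2 (h2 y hy)] at this
      simp at this
    obtain ⟨x, hx⟩ := hR.nonempty (j + 1) hj
    have := hW.dec j x hx (by simp [hne])
    simp [hne, hnext] at this

lemma eq_of_card_filter {S : Finset ℕ} {p : ℕ → Prop} [DecidablePred p] {x y : ℕ}
    (h : #(S.filter p) ≤ 1) (hx : x ∈ S) (hpx : p x) (hy : y ∈ S) (hpy : p y) : x = y :=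
  Finset.card_le_one.1 h x (by simp [hx, hpx]) y (by simp [hy, hpy])

lemma card_filter_pos {S : Finset ℕ} {p : ℕ → Prop} [DecidablePred p] {x : ℕ}
    (hx : x ∈ S) (hpx : p x) : 0 < #(S.filter p) :=
  Finset.card_pos.2 ⟨x, by simp [hx, hpx]⟩

/-- The undecorated values of a run are determined by the smallest one. At most two values are
undecorated, since the smallest one counts all the others. -/
lemma GoodDec.eq_pair {R W : ℕ → Finset ℕ} (hR : RunSeq m R) (hW : GoodDec R W) {j b : ℕ}
    (hb : b ∈ W (j + 1)) (hmin : ∀ y ∈ W (j + 1), b ≤ y) :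
    W (j + 1) = {b, topOf (R j) (R (j + 1)) b} := by
  obtain ⟨hc, hmax⟩ := sup_id_spec ⟨b, hb⟩
  set c := (W (j + 1)).sup id
  have hpair : W (j + 1) = {b, c} := by
    ext y
    simp only [mem_insert, mem_singleton]
    refine ⟨fun hy => ?_, by rintro (rfl | rfl) <;> assumption⟩
    by_contra! h
    have hby := lt_of_le_of_ne (hmin y hy) h.1.symm
    have hyc := lt_of_le_of_ne (hmax y hy) h.2
    have := hW.undec j b hb
    exact h.2 (eq_of_card_filter (p := (b < ·)) (by omega) hy hby hc (hby.trans hyc))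
  suffices c = topOf (R j) (R (j + 1)) b by rw [hpair, this]
  have hbc := hmin c hc
  unfold topOf
  split_ifs with h
  · obtain ⟨hM, hM'⟩ := sup_id_spec ⟨c, hW.sub _ hc⟩
    refine le_antisymm (hM' _ (hW.sub _ hc)) (not_lt.1 fun hlt => ?_)
    -- The maximum of `R (j + 1)` would be decorated and count both `b` and `c`, so `b = c`;
    -- but then `b` has schedule number `0`.
    have hd := hW.dec j _ hM fun hmem => absurd (hmax _ hmem) (by omega)
    have hbc' : b = c := eq_of_card_filter (p := (· < (R (j + 1)).sup id)) (by omega)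
      hb (by omega) hc hlt
    have hu := hW.undec j b hb
    rw [filter_eq_empty_iff.2 fun y hy => not_lt.2 (hbc'.symm ▸ hmax y hy),
      filter_eq_empty_iff.2 fun y hy => not_lt.2 (h y (hW.sub _ hy)).le] at hu
    simp at hu
  · -- If `b < c`, then `c` already accounts for the schedule number of `b`, so a value `x < b` of
    -- `R j` is decorated; it would then count both `b` and `c`.
    by_contra hne
    have hlt : b < c := by omega
    have hu := hW.undec j b hb
    have h1 := card_filter_pos (p := (b < ·)) hc hlt
    have h2 : ∀ y ∈ W j, ¬ y < b := fun y hy hyb => by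
      have := card_filter_pos (p := (· < b)) hy hyb
      omega
    push Not at h
    obtain ⟨x, hx, hxb⟩ := h
    have hxb : x < b := lt_of_le_of_ne hxb fun e => hR.disj j x hx (e ▸ hW.sub _ hb)
    have hxW : x ∉ W j := fun hmem => h2 x hmem hxb
    cases j with
    | zero => exact hxW (hW.zero ▸ hx)
    | succ i =>
      have : _ + #{y ∈ W (i + 1 + 1) | x < y} = 1 := hW.dec i x hx hxW
      exact hlt.ne (eq_of_card_filter (p := (x < ·)) (by omega) hb hxb hc (hxb.trans hlt))

/-- The smallest undecorated value of each run is forced, by induction from the last run. -/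
lemma GoodDec.low_eq {m : ℕ} {R W : ℕ → Finset ℕ} (hR : RunSeq m R) (hW : GoodDec R W) :
    ∀ k ≤ m, lowRev m R k ∈ W (m - k) ∧ ∀ y ∈ W (m - k), lowRev m R k ≤ y := by
  have hmin : ∀ j ≤ m, ∃ b ∈ W j, ∀ y ∈ W j, b ≤ y := fun j hj =>
    (W j).exists_min_image id (hW.nonempty hR hj)
  intro k
  induction k with
  | zero =>
    intro _
    obtain ⟨b, hb, hb'⟩ := hmin m le_rfl
    suffices lowRev m R 0 = b by rw [this]; exact ⟨hb, hb'⟩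
    refine le_antisymm (Nat.sInf_le (s := (R m : Set ℕ)) (hW.sub _ hb)) ?_
    have hx := hR.lowRev_mem 0 (by omega)
    rw [Nat.sub_zero] at hx
    by_contra! hlt
    have hxW : lowRev m R 0 ∉ W m := fun h => absurd (hb' _ h) (by omega)
    cases m with
    | zero => exact hxW (hW.zero ▸ hx)
    | succ i =>
      have h := hW.dec i _ hx hxW
      have he : W (i + 2) = ∅ := subset_empty.1 (hR.empty (i + 2) (by omega) ▸ hW.sub _)
      rw [he, filter_eq_empty_iff.2 fun y hy => not_lt.2 (hlt.le.trans (hb' y hy))] at h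
      simp at h
  | succ k ih =>
    intro hk
    obtain ⟨h1, h2⟩ := ih (by omega)
    obtain ⟨j, rfl⟩ : ∃ j, m = j + k + 1 := ⟨m - k - 1, by omega⟩
    have e1 : j + k + 1 - k = j + 1 := by omega
    have e2 : j + k + 1 - (k + 1) = j := by omega
    rw [e1] at h1 h2
    rw [lowRev, e1, e2]
    have hpair := hW.eq_pair hR h1 h2
    have htop := topOf_cases (S := R j) (hW.sub _ h1)
    set b' := lowRev (j + k + 1) R k
    set c' := topOf (R j) (R (j + 1)) b'
    have hc' : c' ∈ W (j + 1) := by rw [hpair]; simp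
    obtain ⟨b, hb, hbmin⟩ := hmin j (by omega)
    suffices predIn (R j) c' = b by rw [this]; exact ⟨hb, hbmin⟩
    have hu := hW.undec j c' hc'
    have he : ({y ∈ W (j + 1) | c' < y}) = ∅ := by
      rw [hpair]; ext y; simp; omega
    rw [he, card_empty, zero_add] at hu
    obtain ⟨z, hz⟩ := card_pos.1 (by omega : 0 < #{y ∈ W j | y < c'})
    simp only [mem_filter] at hz
    have hbc : b < c' := (hbmin z hz.1).trans_lt hz.2
    refine predIn_eq (hW.sub _ hb) hbc fun x hx hxc => ?_
    by_contra! hbx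
    -- If undecorated, `x` and `b` are both counted by `c'`; if decorated, `x` counts both `b`
    -- and `c'`.
    by_cases hxW : x ∈ W j
    · exact hbx.ne (eq_of_card_filter hu.le hb hbc hxW hxc)
    · cases j with
      | zero => exact hxW (hW.zero ▸ hx)
      | succ i =>
        have h : _ + #{y ∈ W (i + 1 + 1) | x < y} = 1 := hW.dec i x hx hxW
        have g1 := card_filter_pos (p := (· < x)) hb hbx
        have g2 := card_filter_pos (p := (x < ·)) hc' hxc
        omega

lemma GoodDec.eq_theDec {m : ℕ} {R W : ℕ → Finset ℕ} (hR : RunSeq m R) (hW : GoodDec R W) :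
    W = theDec m R := by
  funext j
  by_cases hj : m < j
  · have : W j = ∅ := subset_empty.1 (hR.empty j hj ▸ hW.sub _)
    simp [theDec, hj, this]
  · have h := hW.low_eq hR (m - j) (by omega)
    rw [show m - (m - j) = j by omega] at h
    cases j with
    | zero =>
      have h1 := h.1
      rw [hW.zero, hR.zero, mem_singleton] at h1
      rw [Nat.sub_zero] at h1
      simp [hW.zero, hR.zero, theDec, h1]
    | succ j => simpa [theDec, hj] using hW.eq_pair hR h.1 h.2

/-! ### From positions to runs -/

/-- The index `j` of the run `r_j` containing position `i`: the number of `t < i` such that a new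
run starts at position `t + 1`. -/
def runIdx (E : ℕ → ℕ) (i : ℕ) : ℕ := #{t ∈ range i | ¬ E (t + 1) < E t}

lemma runIdx_succ (E : ℕ → ℕ) (i : ℕ) :
    runIdx E (i + 1) = runIdx E i + if E (i + 1) < E i then 0 else 1 := by
  unfold runIdx
  rw [range_add_one, filter_insert]
  split_ifs <;> simp

lemma runIdx_mono (E : ℕ → ℕ) : Monotone (runIdx E) :=
  monotone_nat_of_le_succ fun i => by rw [runIdx_succ]; omega

lemma decOn_iff (E : ℕ → ℕ) {p q : ℕ} (h : p ≤ q) : decOn E p q ↔ runIdx E p = runIdx E q := by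
  induction q, h using Nat.le_induction with
  | base => simp [decOn]
  | succ q hpq ih =>
    have h1 : decOn E p (q + 1) ↔ decOn E p q ∧ E (q + 1) < E q := by
      simp only [decOn, mem_Ico]
      constructor
      · exact fun h => ⟨fun t ht => h t (by omega), h q (by omega)⟩
      · rintro ⟨h, h'⟩ t ht
        rcases eq_or_ne t q with rfl | hne
        · exact h'
        · exact h t (by omega)
    have hm := runIdx_mono E hpq
    rw [h1, ih, runIdx_succ]
    split_ifs with hd <;> simp [hd]
    omega

lemma runStart_le_iff (E : ℕ → ℕ) {i t : ℕ} : runStart E i ≤ t ↔ runIdx E i ≤ runIdx E t := by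
  rcases le_total i t with h | h
  · have : runStart E i ≤ i := Nat.find_min' _ (by simp [decOn])
    exact ⟨fun _ => runIdx_mono E h, fun _ => this.trans h⟩
  · have hm := runIdx_mono E h
    have hiff : runIdx E i ≤ runIdx E t ↔ decOn E t i := by rw [decOn_iff E h]; omega
    rw [hiff]
    constructor
    · intro hs u hu
      have hspec : decOn E (runStart E i) i := Nat.find_spec (p := fun p => decOn E p i) _
      exact hspec u (by simp at hu ⊢; omega)
    · exact fun hd => Nat.find_min' _ hd

lemma le_runEnd_iff (E : ℕ → ℕ) {n i t : ℕ} (hi : i ≤ n) (ht : t ≤ n) :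
    t ≤ runEnd n E i ↔ runIdx E t ≤ runIdx E i := by
  have hbase : decOn E i i := by simp [decOn]
  rcases le_total t i with h | h
  · exact ⟨fun _ => runIdx_mono E h,
      fun _ => h.trans (Nat.le_findGreatest (P := fun q => decOn E i q) hi hbase)⟩
  · have hm := runIdx_mono E h
    have hiff : runIdx E t ≤ runIdx E i ↔ decOn E i t := by rw [decOn_iff E h]; omega
    rw [hiff]
    constructor
    · intro hs u hu
      have hspec : decOn E i (runEnd n E i) :=
        Nat.findGreatest_spec (P := fun q => decOn E i q) hi hbase
      exact hspec u (by simp at hu ⊢; omega)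
    · exact fun hd => Nat.le_findGreatest (P := fun q => decOn E i q) ht hd

lemma runEnd_le (n : ℕ) (E : ℕ → ℕ) (i : ℕ) : runEnd n E i ≤ n := Nat.findGreatest_le n

/-- The positions of the run `r_j`. -/
def runPos (n : ℕ) (E : ℕ → ℕ) (j : ℕ) : Finset ℕ := {t ∈ range (n + 1) | runIdx E t = j}

lemma mem_runPos {n : ℕ} {E : ℕ → ℕ} {j t : ℕ} : t ∈ runPos n E j ↔ t ≤ n ∧ runIdx E t = j := by
  simp [runPos]

lemma Icc_run {n : ℕ} {E : ℕ → ℕ} {i : ℕ} (hi : i ≤ n) :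
    Icc (runStart E i) (runEnd n E i) = runPos n E (runIdx E i) := by
  ext t
  rw [mem_Icc, mem_runPos, runStart_le_iff]
  constructor
  · rintro ⟨h1, h2⟩
    have ht := h2.trans (runEnd_le n E i)
    exact ⟨ht, le_antisymm ((le_runEnd_iff E hi ht).1 h2) h1⟩
  · rintro ⟨ht, h⟩
    exact ⟨h.ge, (le_runEnd_iff E hi ht).2 h.le⟩

lemma Icc_nextRun {n : ℕ} {E : ℕ → ℕ} {i : ℕ} (hi : i ≤ n) (he : runEnd n E i < n) :
    Icc (runEnd n E i + 1) (runEnd n E (runEnd n E i + 1)) = runPos n E (runIdx E i + 1) := by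
  have h1 := (le_runEnd_iff E hi he.le).1 le_rfl
  have h2 := mt (le_runEnd_iff E hi (t := runEnd n E i + 1) he).2 (by omega)
  have h3 := runIdx_succ E (runEnd n E i)
  have h4 : runIdx E (runEnd n E i + 1) = runIdx E i + 1 := by split_ifs at h3 <;> omega
  ext t
  rw [mem_Icc, mem_runPos]
  constructor
  · rintro ⟨g1, g2⟩
    have ht := g2.trans (runEnd_le n E _)
    have g3 := (le_runEnd_iff E (i := runEnd n E i + 1) he ht).1 g2
    have g4 := mt (le_runEnd_iff E hi ht).2 (by omega)
    exact ⟨ht, by omega⟩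
  · rintro ⟨ht, h⟩
    have g4 := mt (le_runEnd_iff E hi ht).1 (by omega)
    exact ⟨by omega, (le_runEnd_iff E (i := runEnd n E i + 1) he ht).2 (by omega)⟩

lemma nextRun_empty {n : ℕ} {E : ℕ → ℕ} {i : ℕ} (hi : i ≤ n) (he : ¬ runEnd n E i < n) :
    runPos n E (runIdx E i + 1) = ∅ := by
  have hn := (le_runEnd_iff E hi le_rfl).1 (not_lt.1 he)
  refine eq_empty_of_forall_notMem fun t ht => ?_
  rw [mem_runPos] at ht
  have := runIdx_mono E ht.1
  omega

lemma Icc_prevRun {n : ℕ} {E : ℕ → ℕ} {i j : ℕ} (hi : i ≤ n) (hj : runIdx E i = j + 1) :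
    runStart E i ≠ 0 ∧
      Icc (runStart E (runStart E i - 1)) (runStart E i - 1) = runPos n E j := by
  have h0 : runStart E i ≠ 0 := fun h => by
    have := (runStart_le_iff E (i := i) (t := 0)).1 h.le
    simp only [runIdx, range_zero, filter_empty, card_empty] at this hj
    omega
  refine ⟨h0, ?_⟩
  obtain ⟨s, hs⟩ := Nat.exists_eq_add_one_of_ne_zero h0
  have h1 := (runStart_le_iff E (i := i) (t := runStart E i)).1 le_rfl
  have h2 := mt (runStart_le_iff E (i := i) (t := s)).2 (by omega)
  have h3 := runIdx_succ E s
  rw [hs] at h1 ⊢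
  have h5 : runStart E i ≤ i := runStart_le_iff E |>.2 le_rfl
  have h4 : runIdx E s = j := by
    split_ifs at h3 <;> omega
  ext t
  rw [mem_Icc, mem_runPos, Nat.add_sub_cancel, runStart_le_iff, h4]
  have h6 := runStart_le_iff E (i := i) (t := t)
  have h7 : t ≤ s → runIdx E t ≤ runIdx E s := fun h => runIdx_mono E h
  omega

/-- The values in the run `r_j`. -/
def runVals (n : ℕ) (E : ℕ → ℕ) (j : ℕ) : Finset ℕ := (runPos n E j).image E

/-- The undecorated values in the run `r_j`. -/
def undecVals (n : ℕ) (E : ℕ → ℕ) (D : ℕ → Bool) (j : ℕ) : Finset ℕ :=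
  {t ∈ runPos n E j | D t = false}.image E

lemma card_undec {n : ℕ} {E : ℕ → ℕ} (hE : Set.InjOn E (Set.Iic n)) (D : ℕ → Bool) (j : ℕ)
    (p : ℕ → Prop) [DecidablePred p] :
    #{t ∈ runPos n E j | D t = false ∧ p (E t)} = #{y ∈ undecVals n E D j | p y} := by
  rw [undecVals, filter_image, card_image_of_injOn, filter_filter]
  refine hE.mono fun t ht => ?_
  simp only [coe_filter, mem_filter, mem_runPos, Set.mem_ofPred_eq] at ht
  exact ht.1.1.1

/-- The schedule number at a position of the run `r_{j+1}`, in terms of the undecorated values of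
the neighbouring runs. -/
lemma schedNum_eq {n : ℕ} {E : ℕ → ℕ} (hE : Set.InjOn E (Set.Iic n)) (D : ℕ → Bool) {i j : ℕ}
    (hi : i ≤ n) (hj : runIdx E i = j + 1) :
    schedNum n E D i = if D i = true then
        #{y ∈ undecVals n E D (j + 1) | y < E i} + #{y ∈ undecVals n E D (j + 2) | E i < y}
      else #{y ∈ undecVals n E D (j + 1) | E i < y} + #{y ∈ undecVals n E D j | y < E i} := by
  obtain ⟨h0, hprev⟩ := Icc_prevRun hi hj
  have hnext : (if runEnd n E i < n then
          #{t ∈ Icc (runEnd n E i + 1) (runEnd n E (runEnd n E i + 1)) | D t = false ∧ E i < E t}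
        else 0) = #{y ∈ undecVals n E D (j + 2) | E i < y} := by
    rw [← card_undec hE]
    split_ifs with he
    · rw [Icc_nextRun hi he, hj]
    · rw [show j + 2 = runIdx E i + 1 by omega, nextRun_empty hi he]; simp
  unfold schedNum
  rw [if_neg h0, hprev, hnext, Icc_run hi, hj, card_undec hE D (j + 1) (· < E i),
    card_undec hE D (j + 1) (E i < ·), card_undec hE D j (· < E i)]

lemma exists_runIdx_step (E : ℕ → ℕ) (i : ℕ) :
    ∀ j < runIdx E i, ∃ t < i, runIdx E t = j ∧ runIdx E (t + 1) = j + 1 := by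
  induction i with
  | zero => simp [runIdx]
  | succ i ih =>
    intro j hj
    have h := runIdx_succ E i
    by_cases hji : j < runIdx E i
    · obtain ⟨t, ht, h'⟩ := ih j hji
      exact ⟨t, by omega, h'⟩
    · exact ⟨i, by omega, by split_ifs at h <;> omega, by split_ifs at h <;> omega⟩

lemma runIdx_pos {E : ℕ → ℕ} (h0 : E 0 = 0) {i : ℕ} (hi : 1 ≤ i) : 1 ≤ runIdx E i := by
  refine le_trans ?_ (runIdx_mono E hi)
  have := runIdx_succ E 0
  rw [if_neg (by omega)] at this
  simp only [zero_add] at this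
  omega

lemma runSeq_runVals {n : ℕ} {E : ℕ → ℕ} (hE : Set.InjOn E (Set.Iic n)) (h0 : E 0 = 0) :
    RunSeq (runIdx E n) (runVals n E) where
  zero := by
    have : runPos n E 0 = {0} := by
      ext t
      rw [mem_runPos, mem_singleton]
      constructor
      · rintro ⟨_, h⟩
        by_contra hne
        have := runIdx_pos h0 (i := t) (by omega)
        omega
      · rintro rfl
        simp [runIdx]
    simp [runVals, this, h0]
  nonempty j hj := by
    rcases hj.lt_or_eq with hj | rfl
    · obtain ⟨t, ht, h, -⟩ := exists_runIdx_step E n j hj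
      exact ⟨E t, mem_image_of_mem _ (mem_runPos.2 ⟨ht.le, h⟩)⟩
    · exact ⟨E n, mem_image_of_mem _ (mem_runPos.2 ⟨le_rfl, rfl⟩)⟩
  empty j hj := by
    refine image_eq_empty.2 (eq_empty_of_forall_notMem fun t ht => ?_)
    rw [mem_runPos] at ht
    have := runIdx_mono E ht.1
    omega
  disj j x hx hx' := by
    simp only [runVals, mem_image, mem_runPos] at hx hx'
    obtain ⟨t, ⟨ht, h⟩, rfl⟩ := hx
    obtain ⟨u, ⟨hu, h'⟩, hut⟩ := hx'
    have := hE hu ht hut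
    subst this
    omega
  ascent j hj := by
    obtain ⟨t, ht, h, h'⟩ := exists_runIdx_step E n j hj
    refine ⟨E t, mem_image_of_mem _ (mem_runPos.2 ⟨ht.le, h⟩), E (t + 1),
      mem_image_of_mem _ (mem_runPos.2 ⟨ht, h'⟩), ?_⟩
    have hs := runIdx_succ E t
    have hle : ¬ E (t + 1) < E t := fun hlt => by rw [if_pos hlt] at hs; omega
    refine lt_of_le_of_ne (not_lt.1 hle) fun he => ?_
    have := hE (show t ∈ Set.Iic n from ht.le) (show t + 1 ∈ Set.Iic n from ht) he
    omega

lemma mem_undecVals {n : ℕ} {E : ℕ → ℕ} (hE : Set.InjOn E (Set.Iic n)) {D : ℕ → Bool} {i : ℕ}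
    (hi : i ≤ n) : E i ∈ undecVals n E D (runIdx E i) ↔ D i = false := by
  simp only [undecVals, mem_image, mem_filter, mem_runPos]
  constructor
  · rintro ⟨t, ⟨⟨ht, -⟩, hD⟩, he⟩
    exact hE ht hi he ▸ hD
  · exact fun h => ⟨i, ⟨⟨hi, rfl⟩, h⟩, rfl⟩

lemma hasSchedOne_iff {n : ℕ} {E : ℕ → ℕ} (hE : Set.InjOn E (Set.Iic n)) (h0 : E 0 = 0)
    {D : ℕ → Bool} (hD : D 0 = false) :
    HasSchedOne n E D ↔ GoodDec (runVals n E) (undecVals n E D) := by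
  have hpos : ∀ {t j}, runIdx E t = j + 1 → 1 ≤ t := fun {t j} h => by
    by_contra hlt
    obtain rfl : t = 0 := by omega
    simp [runIdx] at h
  have hsub : ∀ j, undecVals n E D j ⊆ runVals n E j := fun j =>
    image_subset_image (filter_subset _ _)
  constructor
  · intro H
    refine ⟨hsub, (hsub 0).antisymm ?_, fun j x hx => ?_, fun j x hx hxW => ?_⟩
    · rw [(runSeq_runVals hE h0).zero, singleton_subset_iff]
      have := (mem_undecVals hE (Nat.zero_le n)).2 hD
      simpa [h0, runIdx] using this
    · simp only [undecVals, mem_image, mem_filter, mem_runPos] at hx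
      obtain ⟨t, ⟨⟨ht, hj⟩, hDt⟩, rfl⟩ := hx
      have := H t (mem_Icc.2 ⟨hpos hj, ht⟩)
      rwa [schedNum_eq hE D ht hj, if_neg (by simp [hDt])] at this
    · simp only [runVals, mem_image, mem_runPos] at hx
      obtain ⟨t, ⟨ht, hj⟩, rfl⟩ := hx
      rw [← hj, mem_undecVals hE ht] at hxW
      have := H t (mem_Icc.2 ⟨hpos hj, ht⟩)
      rwa [schedNum_eq hE D ht hj, if_pos (by simpa using hxW)] at this
  · intro G i hi
    rw [mem_Icc] at hi
    obtain ⟨j, hj⟩ := Nat.exists_eq_add_of_le' (runIdx_pos h0 hi.1)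
    rw [schedNum_eq hE D hi.2 hj]
    have hmem := mem_undecVals hE (D := D) hi.2
    rw [hj] at hmem
    split_ifs with h
    · exact G.dec j _ (mem_image_of_mem _ (mem_runPos.2 ⟨hi.2, hj⟩)) (by simp [hmem, h])
    · exact G.undec j _ (by simpa [hmem] using h)

lemma ent_zero {n : ℕ} (σ : Equiv.Perm (Fin n)) : ent σ 0 = 0 := by simp [ent]

lemma ent_injOn {n : ℕ} (σ : Equiv.Perm (Fin n)) : Set.InjOn (ent σ) (Set.Iic n) := by
  intro i hi k hk h
  simp only [Set.mem_Iic] at hi hk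
  unfold ent at h
  split_ifs at h with h1 h2 h2
  · have := σ.injective (Fin.ext (Nat.succ_injective h))
    simp only [Fin.mk.injEq] at this
    omega
  · omega

lemma isDec_succ {n : ℕ} (D : Finset (Fin n)) (k : Fin n) :
    isDec D (k + 1) = decide (k ∈ D) := by
  have hk := k.isLt
  simp [isDec, hk]

end QEuler

/-- For each permutation `σ` of `{1,…,n}` there is exactly one set of
decorated positions making all schedule numbers equal to `1`; equivalently, forgetting
decorations is a bijection from decorated permutations with schedule `1^n` onto `S_n`. -/
theorem unique_decoration_sched_one (n : ℕ) (σ : Equiv.Perm (Fin n)) :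
    ∃! D : Finset (Fin n), HasSchedOne n (ent σ) (isDec D) := by
  have hE := ent_injOn σ
  have hR := runSeq_runVals hE (ent_zero σ)
  have hdec0 : ∀ D : Finset (Fin n), isDec D 0 = false := fun D => by simp [isDec]
  set W := theDec (runIdx (ent σ) n) (runVals n (ent σ)) with hW
  have hgood : GoodDec (runVals n (ent σ)) W := hR.theDec_good
  refine ⟨({k | ent σ (k + 1) ∉ W (runIdx (ent σ) (k + 1))} : Finset (Fin n)), ?_, ?_⟩
  · dsimp only
    rw [hasSchedOne_iff hE (ent_zero σ) (hdec0 _)]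
    convert hgood using 1
    funext j
    have hmem : ∀ t ≤ n, isDec ({k | ent σ (k + 1) ∉ W (runIdx (ent σ) (k + 1))} :
        Finset (Fin n)) t = false ↔ ent σ t ∈ W (runIdx (ent σ) t) := by
      intro t ht
      cases t with
      | zero => simp [hdec0, runIdx, ent_zero, hgood.zero, hR.zero]
      | succ t => rw [isDec_succ _ ⟨t, ht⟩]; simp
    ext x
    constructor
    · intro hx
      simp only [undecVals, mem_image, mem_filter, mem_runPos] at hx
      obtain ⟨t, ⟨⟨ht, rfl⟩, hD⟩, rfl⟩ := hx
      exact (hmem t ht).1 hD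
    · intro hx
      have hx' := hgood.sub j hx
      simp only [runVals, mem_image, mem_runPos] at hx'
      obtain ⟨t, ⟨ht, rfl⟩, rfl⟩ := hx'
      exact (mem_undecVals hE ht).2 ((hmem t ht).2 hx)
  · intro D hD
    rw [hasSchedOne_iff hE (ent_zero σ) (hdec0 D)] at hD
    ext k
    have hk : (k : ℕ) + 1 ≤ n := k.isLt
    have := mem_undecVals hE (D := isDec D) hk
    rw [hD.eq_theDec hR, ← hW, isDec_succ] at this
    simp [this]
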